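/- Let α, β ∈ (0,2) and set r* := (α+β)/4 − 1/2. Then (max(α,β))/2 − 1 < r* < (min(α,β))/2, and ∫₀^∞ ∫₀^∞ (x·y)^{r*} · u_α(−1,x) · u_β(−1,y) dx dy = 1 − [1 + cos((α+β)π/2)] / [1 + cos((α−β)π/2)]. -/

import Mathlib

open MeasureTheory Real Set

/-- The upwards-overshoot density
`u_α(x,y) = (sin(απ/2)/π) (y-x)⁻¹ (-x/y)^{α/2} 1_{[0,∞)}(y)` (for `x < 0`). -/
noncomputable def uDens (α x y : ℝ) : ℝ :=
  Set.indicator (Set.Ici (0 : ℝ))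
    (fun z => (Real.sin (α * π / 2) / π) * (z - x)⁻¹ * (-x / z) ^ (α / 2)) y

lemma aux_image : (fun t : ℝ => t / (1 - t)) '' Ioo 0 1 = Ioi 0 := by
  ext x
  constructor
  · rintro ⟨t, ⟨h0, h1⟩, rfl⟩
    exact div_pos h0 (by linarith)
  · intro hx
    have hx : 0 < x := hx
    refine ⟨x / (1 + x), ⟨by positivity, ?_⟩, ?_⟩
    · rw [div_lt_one (by positivity)]; linarith
    · have : 1 + x ≠ 0 := by positivity
      have h2 : 1 - x / (1 + x) = 1 / (1 + x) := by field_simp; ring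
      simp only [h2]
      field_simp

lemma aux_int (s : ℝ) (h0 : 0 < s) (h1 : s < 1) :
    ∫ x in Ioi (0 : ℝ), x ^ (s - 1) * (1 + x)⁻¹ = π / sin (π * s) := by
  have hd : ∀ t ∈ Ioo (0 : ℝ) 1,
      HasDerivWithinAt (fun t : ℝ => t / (1 - t)) (1 / (1 - t) ^ 2) (Ioo 0 1) t := by
    intro t ht
    have h : 1 - t ≠ 0 := by linarith [ht.2]
    have := ((hasDerivAt_id t).div ((hasDerivAt_id t).const_sub 1) h).hasDerivWithinAt
      (s := Ioo 0 1)
    have e : (1 * (1 - id t) - id t * -1) / (1 - id t) ^ 2 = 1 / (1 - t) ^ 2 := by simp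
    rw [e] at this
    exact this
  have hinj : InjOn (fun t : ℝ => t / (1 - t)) (Ioo 0 1) := by
    intro a ha b hb hab
    have h : 1 - a ≠ 0 := by linarith [ha.2]
    have h' : 1 - b ≠ 0 := by linarith [hb.2]
    simp only at hab
    rw [div_eq_div_iff h h'] at hab
    linarith
  rw [← aux_image, integral_image_eq_integral_abs_deriv_smul measurableSet_Ioo hd hinj,
    ← Real.Gamma_mul_Gamma_one_sub]
  have hb := ProbabilityTheory.beta_eq_betaIntegralReal s (1 - s) h0 (by linarith)
  have hB : Gamma s * Gamma (1 - s) = ProbabilityTheory.beta s (1 - s) := by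
    simp [ProbabilityTheory.beta]
  rw [hB, hb, Complex.betaIntegral, intervalIntegral.integral_of_le zero_le_one,
    ← integral_Ioc_eq_integral_Ioo]
  have : ∀ t ∈ Ioo (0 : ℝ) 1, |1 / (1 - t) ^ 2| • ((t / (1 - t)) ^ (s - 1) * (1 + t / (1 - t))⁻¹)
      = t ^ (s - 1) * (1 - t) ^ (-s) := by
    intro t ht
    have h : 0 < 1 - t := by linarith [ht.2]
    have e1 : 1 + t / (1 - t) = 1 / (1 - t) := by field_simp; ring
    rw [abs_of_pos (by positivity), e1, Real.div_rpow ht.1.le h.le, Real.rpow_neg h.le,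
      Real.rpow_sub_one h.ne' s, smul_eq_mul]
    have : (1 - t) ^ s ≠ 0 := by positivity
    field_simp
  rw [integral_Ioc_eq_integral_Ioo, setIntegral_congr_fun measurableSet_Ioo this,
    integral_Ioc_eq_integral_Ioo]
  have h3 : ∀ t ∈ Ioo (0 : ℝ) 1, (t : ℂ) ^ ((s : ℂ) - 1) * (1 - (t : ℂ)) ^ (((1 - s : ℝ) : ℂ) - 1)
      = ((t ^ (s - 1) * (1 - t) ^ (-s) : ℝ) : ℂ) := by
    intro t ht
    have h : 0 ≤ 1 - t := by linarith [ht.2]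
    rw [Complex.ofReal_mul, Complex.ofReal_cpow ht.1.le, Complex.ofReal_cpow h]
    push_cast
    congr 2
    ring
  rw [setIntegral_congr_fun measurableSet_Ioo h3, integral_complex_ofReal, Complex.ofReal_re]

lemma aux_u (α r : ℝ) (h0 : 0 < r - α / 2 + 1) (h1 : r - α / 2 + 1 < 1) :
    ∫ x in Ioi (0 : ℝ), x ^ r * uDens α (-1) x
      = sin (α * π / 2) / sin (π * (r - α / 2 + 1)) := by
  have : ∀ x ∈ Ioi (0 : ℝ), x ^ r * uDens α (-1) x
      = (sin (α * π / 2) / π) * (x ^ ((r - α / 2 + 1) - 1) * (1 + x)⁻¹) := by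
    intro x hx
    have hx : 0 < x := hx
    rw [uDens, indicator_of_mem (show x ∈ Ici (0 : ℝ) from hx.le)]
    rw [add_sub_cancel_right, Real.rpow_sub hx, neg_neg, Real.div_rpow zero_le_one hx.le,
      Real.one_rpow, sub_neg_eq_add, add_comm x 1]
    ring
  rw [setIntegral_congr_fun measurableSet_Ioi this, integral_const_mul, aux_int _ h0 h1]
  have := Real.pi_ne_zero
  field_simp


/-- For `α, β ∈ (0,2)` and `r* = (α+β)/4 - 1/2`, one has
`max(α,β)/2 - 1 < r* < min(α,β)/2` and
`∫₀^∞ ∫₀^∞ (xy)^{r*} u_α(-1,x) u_β(-1,y) dx dy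
  = 1 - (1 + cos((α+β)π/2)) / (1 + cos((α-β)π/2))`. -/
theorem overshoot_product_moment_special
    (α β : ℝ) (hα : α ∈ Set.Ioo (0 : ℝ) 2) (hβ : β ∈ Set.Ioo (0 : ℝ) 2) :
    (max α β / 2 - 1 < (α + β) / 4 - 1 / 2 ∧ (α + β) / 4 - 1 / 2 < min α β / 2) ∧
    ∫ y in Set.Ioi (0 : ℝ), ∫ x in Set.Ioi (0 : ℝ),
        (x * y) ^ ((α + β) / 4 - 1 / 2) * uDens α (-1) x * uDens β (-1) y
      = 1 - (1 + Real.cos ((α + β) * π / 2)) / (1 + Real.cos ((α - β) * π / 2)) := by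
  obtain ⟨ha0, ha2⟩ := hα
  obtain ⟨hb0, hb2⟩ := hβ
  refine ⟨⟨?_, ?_⟩, ?_⟩
  · rcases max_choice α β with h | h <;> rw [h] <;> linarith
  · rcases min_choice α β with h | h <;> rw [h] <;> linarith
  set r := (α + β) / 4 - 1 / 2 with hr
  have e : ∀ y ∈ Ioi (0 : ℝ), ∫ x in Ioi (0 : ℝ), (x * y) ^ r * uDens α (-1) x * uDens β (-1) y
      = (∫ x in Ioi (0 : ℝ), x ^ r * uDens α (-1) x) * (y ^ r * uDens β (-1) y) := by
    intro y hy
    rw [← integral_mul_const]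
    refine setIntegral_congr_fun measurableSet_Ioi fun x hx => ?_
    rw [Real.mul_rpow (le_of_lt hx) (le_of_lt hy)]
    ring
  rw [setIntegral_congr_fun measurableSet_Ioi e, integral_const_mul,
    aux_u α r (by rw [hr]; linarith) (by rw [hr]; linarith),
    aux_u β r (by rw [hr]; linarith) (by rw [hr]; linarith)]
  have s1 : sin (π * (r - α / 2 + 1)) = cos ((α - β) * π / 4) := by
    rw [← Real.cos_pi_div_two_sub, hr]; congr 1; ring
  have s2 : sin (π * (r - β / 2 + 1)) = cos ((α - β) * π / 4) := by
    rw [← Real.cos_pi_div_two_sub, hr, ← Real.cos_neg]; congr 1; ring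
  have hc : 0 < cos ((α - β) * π / 4) := by
    apply Real.cos_pos_of_mem_Ioo
    constructor <;> nlinarith [Real.pi_pos]
  have hd : 1 + cos ((α - β) * π / 2) = 2 * cos ((α - β) * π / 4) ^ 2 := by
    rw [show (α - β) * π / 2 = 2 * ((α - β) * π / 4) by ring, Real.cos_two_mul]; ring
  have hn : cos ((α - β) * π / 2) - cos ((α + β) * π / 2)
      = 2 * sin (α * π / 2) * sin (β * π / 2) := by
    rw [show (α - β) * π / 2 = α * π / 2 - β * π / 2 by ring,
      show (α + β) * π / 2 = α * π / 2 + β * π / 2 by ring, Real.cos_sub, Real.cos_add]; ring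
  have hne : 1 + cos ((α - β) * π / 2) ≠ 0 := by rw [hd]; positivity
  rw [s1, s2, one_sub_div hne, hd, div_mul_div_comm, div_eq_div_iff (by positivity) (by positivity)]
  linear_combination (-(cos ((α - β) * π / 4)) ^ 2) * hn + (cos ((α - β) * π / 4)) ^ 2 * hd
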